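/- arXiv:2505.10486 — 3 statements merged into one kernel-verified Lean document; each statement's English description precedes it below -/
import Mathlib

section
/- Let B be a real Banach space, L, N ≥ 1, A : B → ℝ^L a continuous linear map, M : ℝ^N → ℝ^L an injective linear map, λ > 0, and E : ℝ^L → [0,∞] a coercive function (meaning E(z_n) → ∞ for every sequence (z_n) with ‖z_n‖₂ → ∞). Then the functional J(x,c) = E(A x + M c) + λ‖x‖_B is coercive on B × ℝ^N: for every sequence (x_n, c_n) with ‖x_n‖_B + ‖c_n‖₂ → ∞, one has J(x_n, c_n) → ∞. -/
/-!
The value `J(x, c)` can only stay below a bound `R` when both summands do. The second summand then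
gives `‖x‖ ≤ R / λ`, and coercivity of `E` confines `Ax + Mc` to a ball of some radius `r`.
Since `M` is injective on a finite-dimensional space, it is antilipschitz, so
`‖c‖ ≤ K ‖Mc‖ ≤ K (r + ‖A‖ R / λ)`. Hence sublevel sets of `J` are bounded.
-/

open Filter
open scoped ENNReal

/-- Coercivity of `J(x,c) = E(Ax + Mc) + λ‖x‖_B` on `B × ℝ^N`, where `A` is a continuous
linear map, `M` is an injective linear map, `λ > 0`, and `E : ℝ^L → [0,∞]` is coercive. -/
theorem stmt9 (B : Type*) [NormedAddCommGroup B] [NormedSpace ℝ B] [CompleteSpace B]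
    (L N : ℕ) (hL : 1 ≤ L) (hN : 1 ≤ N)
    (A : B →L[ℝ] EuclideanSpace ℝ (Fin L))
    (M : EuclideanSpace ℝ (Fin N) →ₗ[ℝ] EuclideanSpace ℝ (Fin L))
    (hM : Function.Injective M)
    (lam : ℝ) (hlam : 0 < lam)
    (E : EuclideanSpace ℝ (Fin L) → ℝ≥0∞)
    (hE : ∀ z : ℕ → EuclideanSpace ℝ (Fin L),
      Tendsto (fun n => ‖z n‖) atTop atTop →
      Tendsto (fun n => E (z n)) atTop (nhds ⊤)) :
    ∀ (x : ℕ → B) (c : ℕ → EuclideanSpace ℝ (Fin N)),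
      Tendsto (fun n => ‖x n‖ + ‖c n‖) atTop atTop →
      Tendsto (fun n => E (A (x n) + M (c n)) + ENNReal.ofReal (lam * ‖x n‖))
        atTop (nhds ⊤) := by
  intro x c hxc
  -- Sequential coercivity upgrades to convergence along a countably generated filter.
  have hE' : Tendsto E (comap norm atTop) (nhds ⊤) :=
    tendsto_of_seq_tendsto fun z hz => hE z (tendsto_comap_iff.mp hz)
  obtain ⟨K, -, hK⟩ := M.exists_antilipschitzWith (LinearMap.ker_eq_bot.mpr hM)
  rw [ENNReal.tendsto_nhds_top_iff_nnreal] at hE' ⊢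
  intro R
  obtain ⟨r, hr⟩ := eventually_atTop.mp (eventually_comap.mp (hE' R))
  filter_upwards [hxc.eventually_gt_atTop (R / lam + K * (r + ‖A‖ * (R / lam)))] with n hn
  by_contra! hJ
  have hx : ‖x n‖ ≤ R / lam := by
    have h := le_add_self.trans hJ
    rw [ENNReal.ofReal_le_iff_le_toReal ENNReal.coe_ne_top, ENNReal.coe_toReal] at h
    rw [le_div_iff₀ hlam]
    linarith
  have hz : ‖A (x n) + M (c n)‖ ≤ r := by
    by_contra! h
    exact (le_self_add.trans hJ).not_gt (hr _ h.le _ rfl)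
  have hMc : ‖M (c n)‖ ≤ r + ‖A‖ * (R / lam) := calc
    ‖M (c n)‖ = ‖(A (x n) + M (c n)) - A (x n)‖ := by rw [add_sub_cancel_left]
    _ ≤ ‖A (x n) + M (c n)‖ + ‖A (x n)‖ := norm_sub_le _ _
    _ ≤ r + ‖A‖ * (R / lam) := add_le_add hz (A.le_opNorm_of_le hx)
  have hc : ‖c n‖ ≤ K * ‖M (c n)‖ := by
    simpa using hK.le_mul_dist (c n) 0
  have hKM := mul_le_mul_of_nonneg_left hMc K.coe_nonneg
  linarith
end

section
/- Let N ≤ L be nonnegative integers, 𝕋 = ℝ/ℤ the circle, λ_T, λ_S > 0, and E : ℝ^L → [0,∞] a proper, lower semi-continuous, coercive, convex function. For each ℓ = 1, …, L let g_{T,ℓ} : ℝ → ℝ be continuous and vanishing at infinity, g_{S,ℓ} : 𝕋 → ℝ continuous, and z_ℓ ∈ ℝ^N. Define, for a finite signed measure w_T on ℝ, a finite signed measure w_S on 𝕋, and c ∈ ℝ^N, the vector Φ(w_T, w_S, c) ∈ ℝ^L with ℓ-th entry ∫_ℝ g_{T,ℓ} dw_T + ∫_𝕋 g_{S,ℓ}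 dw_S + ⟨z_ℓ, c⟩. Assume that Φ(0,0,c) = 0 implies c = 0, and that E ∘ Φ is not identically +∞. Then the functional J(w_T, w_S, c) = E(Φ(w_T, w_S, c)) + λ_T ‖w_T‖_TV + λ_S ‖w_S‖_TV attains its minimum over the set of triples (w_T, w_S, c), and the set of minimizers is nonempty and convex. -/
/-!
Only the moment vectors `∫ g_T dw_T`, `∫ g_S dw_S ∈ ℝ^L` and the total variations enter `J`, so the
problem reduces to a finite-dimensional one. For continuous `G : X → ℝ^L` vanishing at infinity the
set `{0} ∪ G(X)` is compact, hence so is the convex hull `hullSet G` of this set and its negative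
(Carathéodory). It consists of the moment vectors of signed measures of total variation at most
one: a moment vector is a combination of averages, which stay in a closed convex set
(`exists_hull_of_measure`), and conversely finite combinations of Dirac masses realise every point
of the hull (`exists_measure_of_hull`).

Minimising `J` therefore amounts to minimising
`E (t • k + s • k' + Z c) + λ_T t + λ_S s` over `t, s ≥ 0`, `k ∈ hullSet G_T`, `k' ∈ hullSet G_S` and
`c`, where `Z c = (⟨z_ℓ, c⟩)_ℓ` is injective. This function is lower semicontinuous with relatively
compact sublevel sets, so it attains its minimum (`exists_min_redFun`).

Convexity of the set of minimisers follows from convexity of `J`: `Φ` is linear (`vInt_comb`) and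
the total variation norm is convex (`tvNorm_comb_le`).
-/

open MeasureTheory Filter
open scoped ENNReal RealInnerProductSpace

/-- Integral of a real function against a finite signed measure (difference of integrals
against the Jordan decomposition parts). -/
noncomputable def sInt {α : Type*} [MeasurableSpace α] (μ : SignedMeasure α) (g : α → ℝ) : ℝ :=
  ∫ x, g x ∂μ.toJordanDecomposition.posPart - ∫ x, g x ∂μ.toJordanDecomposition.negPart

/-- Total variation norm of a finite signed measure. -/
noncomputable def tvNorm {α : Type*} [MeasurableSpace α] (μ : SignedMeasure α) : ℝ :=
  (μ.totalVariation Set.univ).toReal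

open scoped NNReal Pointwise

/-! ### Convex hulls of compact sets in finite dimension -/

/-- By Carathéodory's theorem the hull is a finite union of continuous images of the compact sets
`stdSimplex × s ^ m`, `m ≤ dim F + 1`. -/
theorem isCompact_convexHull_of_finiteDimensional {F : Type*} [NormedAddCommGroup F]
    [NormedSpace ℝ F] [FiniteDimensional ℝ F] {s : Set F} (hs : IsCompact s) :
    IsCompact (convexHull ℝ s) := by
  have hcomb : convexHull ℝ s = ⋃ m ∈ Set.Iic (Module.finrank ℝ F + 1),
      (fun p : (Fin m → ℝ) × (Fin m → F) => ∑ i, p.1 i • p.2 i) ''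
        (stdSimplex ℝ (Fin m) ×ˢ Set.univ.pi fun _ => s) := by
    apply Set.Subset.antisymm
    · intro x hx
      obtain ⟨ι, _, y, w, hy, hind, hw, hw1, hsum⟩ := eq_pos_convex_span_of_mem_convexHull hx
      have hcard := hind.card_le_finrank_succ
      have hle : Fintype.card ι ≤ Module.finrank ℝ F + 1 :=
        hcard.trans (Nat.succ_le_succ (Submodule.finrank_le _))
      let e := (Fintype.equivFin ι).symm
      refine Set.mem_biUnion (x := Fintype.card ι) hle ⟨(w ∘ e, y ∘ e), ⟨⟨?_, ?_⟩, ?_⟩, ?_⟩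
      · exact fun i => (hw _).le
      · exact (Equiv.sum_comp e w).trans hw1
      · exact fun i _ => hy (Set.mem_range_self _)
      · exact (Equiv.sum_comp e fun i => w i • y i).trans hsum
    · refine Set.iUnion₂_subset fun m _ => ?_
      rintro _ ⟨⟨w, y⟩, ⟨⟨hw, hw1⟩, hy⟩, rfl⟩
      exact (convex_convexHull ℝ s).sum_mem (fun i _ => hw i) hw1
        (fun i _ => subset_convexHull ℝ s (hy i trivial))
  rw [hcomb]
  refine (Set.finite_Iic _).isCompact_biUnion fun m _ => ?_
  refine ((isCompact_stdSimplex ℝ (Fin m)).prod (isCompact_univ_pi fun _ => hs)).image ?_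
  fun_prop

/-- The convex hull of `0` and the values of `G` and `-G`. For integrable `G` with
`insert 0 (range G)` compact, and `F` finite-dimensional, it is the set of integrals of `G` against
signed measures of total variation at most one. The point `0` plays the role of the value of `G` at
infinity and makes the generating set closed. -/
def hullSet {X F : Type*} [NormedAddCommGroup F] [NormedSpace ℝ F] (G : X → F) : Set F :=
  convexHull ℝ (insert 0 (Set.range G) ∪ -insert 0 (Set.range G))

theorem zero_mem_hullSet {X F : Type*} [NormedAddCommGroup F] [NormedSpace ℝ F] (G : X → F) :
    (0 : F) ∈ hullSet G :=
  subset_convexHull ℝ _ (Or.inl (Set.mem_insert _ _))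

theorem isCompact_hullSet {X F : Type*} [NormedAddCommGroup F] [NormedSpace ℝ F]
    [FiniteDimensional ℝ F] {G : X → F}
    (hG : IsCompact (insert 0 (Set.range G))) : IsCompact (hullSet G) :=
  isCompact_convexHull_of_finiteDimensional (hG.union hG.neg)

/-! ### Integration against signed measures and the total variation norm -/

section SignedIntegral

variable {X : Type*} [MeasurableSpace X] {F : Type*} [NormedAddCommGroup F] [NormedSpace ℝ F]

/-- Vector-valued version of `sInt`. -/
noncomputable def vInt (w : SignedMeasure X) (G : X → F) : F :=
  ∫ x, G x ∂w.toJordanDecomposition.posPart - ∫ x, G x ∂w.toJordanDecomposition.negPart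

theorem sub_jordan (w : SignedMeasure X) :
    w.toJordanDecomposition.posPart.toSignedMeasure
      - w.toJordanDecomposition.negPart.toSignedMeasure = w :=
  w.toSignedMeasure_toJordanDecomposition

theorem tvNorm_eq (w : SignedMeasure X) :
    tvNorm w = w.toJordanDecomposition.posPart.real Set.univ
      + w.toJordanDecomposition.negPart.real Set.univ := by
  rw [tvNorm, SignedMeasure.totalVariation, ← measureReal_def, measureReal_add_apply]

theorem tvNorm_nonneg (w : SignedMeasure X) : 0 ≤ tvNorm w := ENNReal.toReal_nonneg

/-- The integral may be computed from any decomposition `w = μ - ν` into finite measures, since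
`w⁺ + ν = μ + w⁻`. -/
theorem vInt_sub (μ ν : Measure X) [IsFiniteMeasure μ] [IsFiniteMeasure ν] (G : X → F)
    (hG : ∀ (ρ : Measure X) [IsFiniteMeasure ρ], Integrable G ρ) :
    vInt (μ.toSignedMeasure - ν.toSignedMeasure) G = ∫ x, G x ∂μ - ∫ x, G x ∂ν := by
  set w := μ.toSignedMeasure - ν.toSignedMeasure with hw
  have h := sub_jordan w
  have hadd : w.toJordanDecomposition.posPart + ν = μ + w.toJordanDecomposition.negPart := by
    rw [← Measure.toSignedMeasure_eq_toSignedMeasure_iff, Measure.toSignedMeasure_add,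
      Measure.toSignedMeasure_add]
    rw [hw, sub_eq_sub_iff_add_eq_add] at h
    exact h
  have hint := congrArg (fun ρ => ∫ x, G x ∂ρ) hadd
  rw [integral_add_measure (hG _) (hG _), integral_add_measure (hG _) (hG _)] at hint
  rw [vInt, sub_eq_sub_iff_add_eq_add]
  exact hint

/-- Minimality of the Jordan decomposition: on a Hahn set `i`, `w⁺` has mass `μ i - ν i`, and `w⁻`
has mass `ν iᶜ - μ iᶜ`. -/
theorem tvNorm_sub_le (μ ν : Measure X) [IsFiniteMeasure μ] [IsFiniteMeasure ν] :
    tvNorm (μ.toSignedMeasure - ν.toSignedMeasure) ≤ μ.real Set.univ + ν.real Set.univ := by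
  set w := μ.toSignedMeasure - ν.toSignedMeasure with hw
  obtain ⟨i, hi, hpos, hneg, hp, hn⟩ := w.toJordanDecomposition_spec
  rw [tvNorm_eq, hp, hn, SignedMeasure.toMeasureOfZeroLE_real_apply _ hpos hi MeasurableSet.univ,
    SignedMeasure.toMeasureOfLEZero_real_apply _ hneg hi.compl MeasurableSet.univ,
    Set.inter_univ, Set.inter_univ, hw, Measure.toSignedMeasure_sub_apply hi,
    Measure.toSignedMeasure_sub_apply hi.compl]
  have h1 : μ.real i ≤ μ.real Set.univ := measureReal_mono (Set.subset_univ _)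
  have h2 : ν.real iᶜ ≤ ν.real Set.univ := measureReal_mono (Set.subset_univ _)
  have h3 : 0 ≤ ν.real i := measureReal_nonneg
  have h4 : 0 ≤ μ.real iᶜ := measureReal_nonneg
  linarith

/-- Nonnegative combinations of Jordan parts decompose the combination of the signed measures (the
resulting parts need not be mutually singular). -/
theorem comb_eq (a b : ℝ≥0) (w v : SignedMeasure X) :
    (a : ℝ) • w + (b : ℝ) • v =
      (a • w.toJordanDecomposition.posPart + b • v.toJordanDecomposition.posPart).toSignedMeasure
      - (a • w.toJordanDecomposition.negPart
          + b • v.toJordanDecomposition.negPart).toSignedMeasure := by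
  nth_rewrite 1 [← sub_jordan w]
  nth_rewrite 1 [← sub_jordan v]
  simp only [Measure.toSignedMeasure_add, Measure.toSignedMeasure_smul, NNReal.smul_def, smul_sub]
  abel

theorem vInt_comb (a b : ℝ≥0) (w v : SignedMeasure X) (G : X → F)
    (hG : ∀ (ρ : Measure X) [IsFiniteMeasure ρ], Integrable G ρ) :
    vInt ((a : ℝ) • w + (b : ℝ) • v) G = (a : ℝ) • vInt w G + (b : ℝ) • vInt v G := by
  rw [comb_eq, vInt_sub _ _ _ hG, integral_add_measure (hG _) (hG _),
    integral_add_measure (hG _) (hG _)]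
  simp only [integral_smul_nnreal_measure, vInt, NNReal.smul_def, smul_sub]
  abel

theorem tvNorm_comb_le (a b : ℝ≥0) (w v : SignedMeasure X) :
    tvNorm ((a : ℝ) • w + (b : ℝ) • v) ≤ a * tvNorm w + b * tvNorm v := by
  rw [comb_eq]
  refine (tvNorm_sub_le _ _).trans (le_of_eq ?_)
  rw [measureReal_add_apply, measureReal_add_apply, tvNorm_eq, tvNorm_eq]
  simp only [measureReal_nnreal_smul_apply]
  ring

theorem ofReal_tvNorm_comb_le {lam : ℝ} (hlam : 0 ≤ lam) (a b : ℝ≥0) (w v : SignedMeasure X) :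
    ENNReal.ofReal (lam * tvNorm ((a : ℝ) • w + (b : ℝ) • v)) ≤
      a * ENNReal.ofReal (lam * tvNorm w) + b * ENNReal.ofReal (lam * tvNorm v) := by
  have hw := mul_nonneg a.coe_nonneg (mul_nonneg hlam (tvNorm_nonneg w))
  have hv := mul_nonneg b.coe_nonneg (mul_nonneg hlam (tvNorm_nonneg v))
  rw [← ENNReal.ofReal_coe_nnreal (p := a), ← ENNReal.ofReal_coe_nnreal (p := b),
    ← ENNReal.ofReal_mul a.coe_nonneg, ← ENNReal.ofReal_mul b.coe_nonneg,
    ← ENNReal.ofReal_add hw hv]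
  refine ENNReal.ofReal_le_ofReal ?_
  have := mul_le_mul_of_nonneg_left (tvNorm_comb_le a b w v) hlam
  linarith

/-- The average of `G` lies in any closed convex set containing its values; the hypothesis `0 ∈ K`
is only there to cover `ρ = 0`. -/
theorem integral_mem_smul [CompleteSpace F] (ρ : Measure X) [IsFiniteMeasure ρ] {G : X → F}
    (hG : Integrable G ρ) {K : Set F} (hconv : Convex ℝ K) (hcl : IsClosed K) (h0 : (0 : F) ∈ K)
    (hGK : ∀ x, G x ∈ K) : ∫ x, G x ∂ρ ∈ ρ.real Set.univ • K := by
  rcases eq_or_ne ρ 0 with rfl | hρ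
  · exact ⟨0, h0, by simp⟩
  · have : NeZero ρ := ⟨hρ⟩
    exact ⟨⨍ x, G x ∂ρ, hconv.average_mem hcl (ae_of_all _ hGK) hG, measure_smul_average ρ G⟩

/-! ### Moment vectors of signed measures -/

/-- The moment vector of `w` is a point of `‖w‖_TV • hullSet G`: split it as
`∫ G dw⁺ + ∫ (-G) dw⁻`. -/
theorem exists_hull_of_measure [FiniteDimensional ℝ F] {G : X → F}
    (hcpt : IsCompact (insert 0 (Set.range G)))
    (hG : ∀ (ρ : Measure X) [IsFiniteMeasure ρ], Integrable G ρ) (w : SignedMeasure X) :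
    ∃ k ∈ hullSet G, vInt w G = tvNorm w • k := by
  have : CompleteSpace F := FiniteDimensional.complete ℝ F
  have hconv : Convex ℝ (hullSet G) := convex_convexHull ℝ _
  have hcl : IsClosed (hullSet G) := (isCompact_hullSet hcpt).isClosed
  have h0 := zero_mem_hullSet G
  have h1 := integral_mem_smul w.toJordanDecomposition.posPart (hG _) hconv hcl h0
    fun x => subset_convexHull ℝ _ (Or.inl (Set.mem_insert_of_mem _ ⟨x, rfl⟩))
  have h2 := integral_mem_smul w.toJordanDecomposition.negPart (hG _).neg hconv hcl h0
    fun x => subset_convexHull ℝ _ (Or.inr (Set.neg_mem_neg.2 (Set.mem_insert_of_mem _ ⟨x, rfl⟩)))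
  have h3 := Set.add_mem_add h1 h2
  rw [← hconv.add_smul measureReal_nonneg measureReal_nonneg, ← tvNorm_eq] at h3
  obtain ⟨k, hk, hk'⟩ := h3
  refine ⟨k, hk, ?_⟩
  rw [show tvNorm w • k = _ from hk', vInt, sub_eq_add_neg]
  simp only [Pi.neg_apply, integral_neg]

/-- Converse: Dirac masses `± δ_x` and `0` realise the generators of the hull, and the moment vectors
of measures of total variation at most one form a convex set. -/
theorem exists_measure_of_hull {G : X → F} [CompleteSpace F]
    (hG : ∀ (ρ : Measure X) [IsFiniteMeasure ρ], Integrable G ρ)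
    (hGm : StronglyMeasurable G) {k : F} (hk : k ∈ hullSet G) {t : ℝ} (ht : 0 ≤ t) :
    ∃ w : SignedMeasure X, tvNorm w ≤ t ∧ vInt w G = t • k := by
  have hzero : vInt (0 : SignedMeasure X) G = 0 := by
    simp [vInt, SignedMeasure.toJordanDecomposition_zero]
  have hzero' : tvNorm (0 : SignedMeasure X) = 0 := by
    simp [tvNorm, SignedMeasure.totalVariation_zero]
  have hsub : hullSet G ⊆ {y | ∃ w : SignedMeasure X, tvNorm w ≤ 1 ∧ vInt w G = y} := by
    refine convexHull_min ?_ ?_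
    · rintro y (hy | hy)
      · rcases hy with rfl | ⟨x, rfl⟩
        · exact ⟨0, by simp [hzero'], hzero⟩
        · refine ⟨(Measure.dirac x).toSignedMeasure - (0 : Measure X).toSignedMeasure,
            (tvNorm_sub_le _ _).trans (by simp), ?_⟩
          rw [vInt_sub _ _ _ hG, integral_dirac' _ _ hGm]
          simp
      · rw [Set.mem_neg] at hy
        rcases hy with hy | ⟨x, hx⟩
        · exact ⟨0, by simp [hzero'], by rw [hzero, ← neg_eq_zero.1 hy]⟩
        · refine ⟨(0 : Measure X).toSignedMeasure - (Measure.dirac x).toSignedMeasure,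
            (tvNorm_sub_le _ _).trans (by simp), ?_⟩
          rw [vInt_sub _ _ _ hG, integral_dirac' _ _ hGm, hx]
          simp
    · rintro _ ⟨w, hw, rfl⟩ _ ⟨v, hv, rfl⟩ a b ha hb hab
      lift a to ℝ≥0 using ha
      lift b to ℝ≥0 using hb
      refine ⟨(a : ℝ) • w + (b : ℝ) • v, (tvNorm_comb_le a b w v).trans ?_,
        vInt_comb a b w v G hG⟩
      calc (a : ℝ) * tvNorm w + b * tvNorm v ≤ a * 1 + b * 1 := by gcongr
        _ = 1 := by linarith
  obtain ⟨w, hw, hwk⟩ := hsub hk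
  lift t to ℝ≥0 using ht
  have h1 := tvNorm_comb_le t 0 w 0
  have h2 := vInt_comb t 0 w 0 G hG
  simp only [NNReal.coe_zero, zero_smul, add_zero, zero_mul] at h1 h2
  refine ⟨(t : ℝ) • w, h1.trans (mul_le_of_le_one_right t.2 hw), by rw [h2, hwk]⟩

theorem vInt_apply {L : ℕ} (w : SignedMeasure X) (G : X → EuclideanSpace ℝ (Fin L))
    (hG : ∀ (ρ : Measure X) [IsFiniteMeasure ρ], Integrable G ρ) (l : Fin L) :
    vInt w G l = sInt w fun x => G x l := by
  have h : ∀ (ρ : Measure X) [IsFiniteMeasure ρ], (∫ x, G x ∂ρ) l = ∫ x, G x l ∂ρ := by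
    intro ρ _
    exact ((EuclideanSpace.proj (𝕜 := ℝ) l).integral_comp_comm (hG ρ)).symm
  rw [vInt, sInt, PiLp.sub_apply, h, h]

end SignedIntegral

/-! ### The reduced finite-dimensional problem -/

theorem exists_norm_bound_of_coercive {F : Type*} [NormedAddCommGroup F] {E : F → ℝ≥0∞}
    (hE : ∀ z : ℕ → F, Tendsto (fun n => ‖z n‖) atTop atTop →
      Tendsto (fun n => E (z n)) atTop (nhds ⊤))
    {M : ℝ≥0∞} (hM : M ≠ ⊤) : ∃ R : ℝ, ∀ y, E y ≤ M → ‖y‖ ≤ R := by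
  by_contra! h
  choose y hyM hy using fun n : ℕ => h n
  have hlim := hE y (tendsto_atTop_mono (fun n => (hy n).le) tendsto_natCast_atTop_atTop)
  exact hM (top_le_iff.1 (le_of_tendsto' hlim hyM))

/-- The reduced functional. The point `(t, k, s, k', c)` stands for a triple `(w_T, w_S, c)` whose
measures have total variations at most `t`, `s` and moment vectors `t • k`, `s • k'`. -/
noncomputable def redFun {F C : Type*} [NormedAddCommGroup F] [NormedSpace ℝ F]
    [NormedAddCommGroup C] [NormedSpace ℝ C] (E : F → ℝ≥0∞) (Z : C →ₗ[ℝ] F) (lamT lamS : ℝ)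
    (p : ℝ × F × ℝ × F × C) : ℝ≥0∞ :=
  E (p.1 • p.2.1 + p.2.2.1 • p.2.2.2.1 + Z p.2.2.2.2)
    + ENNReal.ofReal (lamT * p.1) + ENNReal.ofReal (lamS * p.2.2.1)

/-- The reduced functional is lower semicontinuous, and its sublevel sets lie in a compact box: the
penalties bound `t` and `s`, coercivity bounds the argument of `E`, hence `Z c`, and injectivity of
`Z` then bounds `c`. -/
theorem exists_min_redFun {F C : Type*} [NormedAddCommGroup F] [NormedSpace ℝ F]
    [NormedAddCommGroup C] [NormedSpace ℝ C] [FiniteDimensional ℝ C]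
    {E : F → ℝ≥0∞} (hElsc : LowerSemicontinuous E)
    (hE : ∀ z : ℕ → F, Tendsto (fun n => ‖z n‖) atTop atTop →
      Tendsto (fun n => E (z n)) atTop (nhds ⊤))
    {Z : C →ₗ[ℝ] F} (hZ : LinearMap.ker Z = ⊥) {lamT lamS : ℝ} (hlamT : 0 < lamT)
    (hlamS : 0 < lamS) {K₁ K₂ : Set F} (hK₁ : IsCompact K₁) (hK₂ : IsCompact K₂)
    {A : Set (ℝ × F × ℝ × F × C)}
    (hA : A = Set.Ici 0 ×ˢ K₁ ×ˢ Set.Ici 0 ×ˢ K₂ ×ˢ Set.univ)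
    {p₀ : ℝ × F × ℝ × F × C} (hp₀ : p₀ ∈ A) (hfin : redFun E Z lamT lamS p₀ ≠ ⊤) :
    ∃ p ∈ A, ∀ q ∈ A, redFun E Z lamT lamS p ≤ redFun E Z lamT lamS q := by
  have : ProperSpace C := FiniteDimensional.proper ℝ C
  set M := redFun E Z lamT lamS p₀ with hM
  obtain ⟨R, hR⟩ := exists_norm_bound_of_coercive hE hfin
  obtain ⟨R₁, hR₁⟩ := hK₁.isBounded.exists_norm_le
  obtain ⟨R₂, hR₂⟩ := hK₂.isBounded.exists_norm_le
  obtain ⟨κ, -, hκ⟩ := Z.exists_antilipschitzWith hZ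
  set T := M.toReal / lamT with hT
  set S := M.toReal / lamS with hS
  set B : Set (ℝ × F × ℝ × F × C) := Set.Icc 0 T ×ˢ K₁ ×ˢ Set.Icc 0 S ×ˢ K₂ ×ˢ
    Metric.closedBall 0 (κ * (R + T * R₁ + S * R₂)) with hB
  have hBcpt : IsCompact B := isCompact_Icc.prod (hK₁.prod (isCompact_Icc.prod
    (hK₂.prod (isCompact_closedBall _ _))))
  have hBA : B ⊆ A := by
    rw [hA, hB]
    exact Set.prod_mono Set.Icc_subset_Ici_self (Set.prod_mono subset_rfl
      (Set.prod_mono Set.Icc_subset_Ici_self (Set.prod_mono subset_rfl (Set.subset_univ _))))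
  have hsub : ∀ q ∈ A, redFun E Z lamT lamS q ≤ M → q ∈ B := by
    rintro ⟨t, k, s, k', c⟩ hq hqM
    rw [hA] at hq
    obtain ⟨ht, hk, hs, hk', -⟩ := hq
    simp only [Set.mem_Ici] at ht hk hs hk'
    simp only [redFun] at hqM
    have hEM := hR _ (le_self_add.trans (le_self_add.trans hqM))
    have htM : ENNReal.ofReal (lamT * t) ≤ M := (le_add_self.trans le_self_add).trans hqM
    have hsM : ENNReal.ofReal (lamS * s) ≤ M := le_add_self.trans hqM
    have htT : t ≤ T := by
      rw [hT, le_div_iff₀ hlamT, mul_comm]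
      exact (ENNReal.ofReal_le_iff_le_toReal hfin).1 htM
    have hsS : s ≤ S := by
      rw [hS, le_div_iff₀ hlamS, mul_comm]
      exact (ENNReal.ofReal_le_iff_le_toReal hfin).1 hsM
    have hk1 := hR₁ k hk
    have hk2 := hR₂ k' hk'
    have htk : ‖t • k‖ ≤ T * R₁ := by
      rw [norm_smul, Real.norm_of_nonneg ht]
      exact mul_le_mul htT hk1 (norm_nonneg _) (ht.trans htT)
    have hsk : ‖s • k'‖ ≤ S * R₂ := by
      rw [norm_smul, Real.norm_of_nonneg hs]
      exact mul_le_mul hsS hk2 (norm_nonneg _) (hs.trans hsS)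
    have hZc : ‖Z c‖ ≤ R + T * R₁ + S * R₂ := by
      have h1 : Z c = (t • k + s • k' + Z c) - t • k - s • k' := by abel
      have h2 := norm_sub_le ((t • k + s • k' + Z c) - t • k) (s • k')
      have h3 := norm_sub_le (t • k + s • k' + Z c) (t • k)
      rw [← h1] at h2
      linarith
    have hc : ‖c‖ ≤ κ * (R + T * R₁ + S * R₂) := by
      have h := hκ.le_mul_dist c 0
      rw [map_zero, dist_zero_right, dist_zero_right] at h
      exact h.trans (mul_le_mul_of_nonneg_left hZc κ.2)
    exact ⟨⟨ht, htT⟩, hk, ⟨hs, hsS⟩, hk', mem_closedBall_zero_iff.2 hc⟩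
  have hlsc : LowerSemicontinuous (redFun E Z lamT lamS) := by
    have hZcont : Continuous Z := Z.continuous_of_finiteDimensional
    refine LowerSemicontinuous.add (LowerSemicontinuous.add ?_ ?_) ?_
    · exact hElsc.comp (g := fun p : ℝ × F × ℝ × F × C =>
        p.1 • p.2.1 + p.2.2.1 • p.2.2.2.1 + Z p.2.2.2.2) (by fun_prop)
    · exact (ENNReal.continuous_ofReal.comp (by fun_prop)).lowerSemicontinuous
    · exact (ENNReal.continuous_ofReal.comp (by fun_prop)).lowerSemicontinuous
  have hp₀B : p₀ ∈ B := hsub p₀ hp₀ le_rfl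
  obtain ⟨p, hpB, hmin⟩ := (hlsc.lowerSemicontinuousOn B).exists_isMinOn ⟨p₀, hp₀B⟩ hBcpt
  refine ⟨p, hBA hpB, fun q hq => ?_⟩
  rcases le_total (redFun E Z lamT lamS q) M with h | h
  · exact hmin (hsub q hq h)
  · exact (hmin hp₀B).trans h

theorem integrable_of_compact_range {X F : Type*} [MeasurableSpace X] [TopologicalSpace X]
    [OpensMeasurableSpace X] [NormedAddCommGroup F] [SecondCountableTopology F]
    {G : X → F} (hGc : Continuous G)
    (hcpt : IsCompact (insert 0 (Set.range G))) (ρ : Measure X) [IsFiniteMeasure ρ] :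
    Integrable G ρ := by
  obtain ⟨R, hR⟩ := hcpt.isBounded.exists_norm_le
  borelize F
  exact Integrable.of_bound hGc.measurable.aestronglyMeasurable R
    (ae_of_all _ fun x => hR _ (Set.mem_insert_of_mem _ ⟨x, rfl⟩))

/-! ### Existence of minimizers and convexity of their set -/

/-- Existence of minimizers for the seasonal-trend recovery problem over Radon measures:
with a proper, lower semi-continuous, coercive, convex data-fidelity `E`, sensing data
`g_{T,ℓ} ∈ C₀(ℝ)`, `g_{S,ℓ} ∈ C(𝕋)`, `z_ℓ ∈ ℝ^N` such that `Φ(0,0,c) = 0 ⟹ c = 0` and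
`E ∘ Φ` is proper, the functional
`J(w_T, w_S, c) = E(Φ(w_T,w_S,c)) + λ_T‖w_T‖_TV + λ_S‖w_S‖_TV` attains its minimum,
and the set of minimizers is nonempty and convex. -/
theorem stmt10 (L N : ℕ) (hNL : N ≤ L)
    (lamT lamS : ℝ) (hlamT : 0 < lamT) (hlamS : 0 < lamS)
    (E : EuclideanSpace ℝ (Fin L) → ℝ≥0∞)
    (hEproper : ∃ z, E z ≠ ⊤)
    (hElsc : LowerSemicontinuous E)
    (hEcoercive : ∀ z : ℕ → EuclideanSpace ℝ (Fin L),
      Tendsto (fun n => ‖z n‖) atTop atTop →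
      Tendsto (fun n => E (z n)) atTop (nhds ⊤))
    (hEconvex : ∀ z w : EuclideanSpace ℝ (Fin L), ∀ a b : ℝ, 0 ≤ a → 0 ≤ b → a + b = 1 →
      E (a • z + b • w) ≤ ENNReal.ofReal a * E z + ENNReal.ofReal b * E w)
    (gT : Fin L → ℝ → ℝ)
    (hgTcont : ∀ ℓ, Continuous (gT ℓ))
    (hgTzero : ∀ ℓ, Tendsto (gT ℓ) (cocompact ℝ) (nhds 0))
    (gS : Fin L → AddCircle (1:ℝ) → ℝ)
    (hgScont : ∀ ℓ, Continuous (gS ℓ))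
    (z : Fin L → EuclideanSpace ℝ (Fin N))
    (Φ : SignedMeasure ℝ → SignedMeasure (AddCircle (1:ℝ)) → EuclideanSpace ℝ (Fin N) →
      EuclideanSpace ℝ (Fin L))
    (hΦ : ∀ wT wS c ℓ, Φ wT wS c ℓ = sInt wT (gT ℓ) + sInt wS (gS ℓ) + ⟪z ℓ, c⟫)
    (hinj : ∀ c, Φ 0 0 c = 0 → c = 0)
    (J : SignedMeasure ℝ × SignedMeasure (AddCircle (1:ℝ)) × EuclideanSpace ℝ (Fin N) →
      ℝ≥0∞)
    (hJ : ∀ wT wS c, J (wT, wS, c) = E (Φ wT wS c)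
      + ENNReal.ofReal (lamT * tvNorm wT) + ENNReal.ofReal (lamS * tvNorm wS))
    (hJproper : ∃ wT wS c, E (Φ wT wS c) ≠ ⊤) :
    (∃ v, ∀ u, J v ≤ J u) ∧
    {v | ∀ u, J v ≤ J u}.Nonempty ∧
    Convex ℝ {v | ∀ u, J v ≤ J u} := by
  set GT : ℝ → EuclideanSpace ℝ (Fin L) := fun x => WithLp.toLp 2 fun l => gT l x with hGT
  set GS : AddCircle (1:ℝ) → EuclideanSpace ℝ (Fin L) :=
    fun x => WithLp.toLp 2 fun l => gS l x with hGS
  have hGTc : Continuous GT := by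
    refine (PiLp.continuous_toLp 2 _).comp (continuous_pi hgTcont)
  have hGSc : Continuous GS := by
    refine (PiLp.continuous_toLp 2 _).comp (continuous_pi hgScont)
  have hGT0 : Tendsto GT (cocompact ℝ) (nhds 0) :=
    ((PiLp.continuous_toLp 2 fun _ : Fin L => ℝ).tendsto 0).comp (tendsto_pi_nhds.2 hgTzero)
  have hGS0 : Tendsto GS (cocompact (AddCircle (1:ℝ))) (nhds 0) := by
    rw [cocompact_eq_bot]
    exact tendsto_bot
  have hTcpt : IsCompact (insert 0 (Set.range GT)) :=
    hGT0.isCompact_insert_range_of_cocompact hGTc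
  have hScpt : IsCompact (insert 0 (Set.range GS)) :=
    hGS0.isCompact_insert_range_of_cocompact hGSc
  have hTint : ∀ (ρ : Measure ℝ) [IsFiniteMeasure ρ], Integrable GT ρ :=
    fun ρ _ => integrable_of_compact_range hGTc hTcpt ρ
  have hSint : ∀ (ρ : Measure (AddCircle (1:ℝ))) [IsFiniteMeasure ρ], Integrable GS ρ :=
    fun ρ _ => integrable_of_compact_range hGSc hScpt ρ
  let Z : EuclideanSpace ℝ (Fin N) →ₗ[ℝ] EuclideanSpace ℝ (Fin L) :=
    { toFun := fun c => WithLp.toLp 2 fun l => ⟪z l, c⟫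
      map_add' := fun c d => by ext l; simp [inner_add_right]
      map_smul' := fun a c => by ext l; simp [inner_smul_right] }
  have hΦ' : ∀ wT wS c, Φ wT wS c = vInt wT GT + vInt wS GS + Z c := by
    intro wT wS c
    ext l
    rw [hΦ, PiLp.add_apply, PiLp.add_apply, vInt_apply _ _ hTint, vInt_apply _ _ hSint]
    rfl
  have hZ : LinearMap.ker Z = ⊥ := by
    rw [LinearMap.ker_eq_bot']
    intro c hc
    refine hinj c ?_
    rw [hΦ', hc]
    simp [vInt, SignedMeasure.toJordanDecomposition_zero]
  set A : Set (ℝ × EuclideanSpace ℝ (Fin L) × ℝ × EuclideanSpace ℝ (Fin L) ×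
      EuclideanSpace ℝ (Fin N)) :=
    Set.Ici 0 ×ˢ hullSet GT ×ˢ Set.Ici 0 ×ˢ hullSet GS ×ˢ Set.univ with hA
  -- Every triple has a reduced point of equal value; every reduced point has a triple of no larger
  -- value. Hence a reduced minimiser yields a minimiser of `J`.
  have hlift : ∀ u, ∃ p ∈ A, J u = redFun E Z lamT lamS p := by
    rintro ⟨wT, wS, c⟩
    obtain ⟨k, hk, hkT⟩ := exists_hull_of_measure hTcpt hTint wT
    obtain ⟨k', hk', hkS⟩ := exists_hull_of_measure hScpt hSint wS
    refine ⟨(tvNorm wT, k, tvNorm wS, k', c),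
      ⟨tvNorm_nonneg wT, hk, tvNorm_nonneg wS, hk', trivial⟩, ?_⟩
    rw [hJ, hΦ', hkT, hkS, redFun]
  have hdesc : ∀ p ∈ A, ∃ u, J u ≤ redFun E Z lamT lamS p := by
    rintro ⟨t, k, s, k', c⟩ ⟨ht, hk, hs, hk', -⟩
    obtain ⟨wT, hwT, hvT⟩ := exists_measure_of_hull hTint hGTc.stronglyMeasurable hk ht
    obtain ⟨wS, hwS, hvS⟩ := exists_measure_of_hull hSint hGSc.stronglyMeasurable hk' hs
    refine ⟨(wT, wS, c), ?_⟩
    rw [hJ, hΦ', hvT, hvS, redFun]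
    gcongr
  have hex : ∃ v, ∀ u, J v ≤ J u := by
    obtain ⟨wT, wS, c, hfin⟩ := hJproper
    obtain ⟨p₀, hp₀, hJp₀⟩ := hlift (wT, wS, c)
    have hp₀fin : redFun E Z lamT lamS p₀ ≠ ⊤ := by
      rw [← hJp₀, hJ]
      exact ENNReal.add_ne_top.2 ⟨ENNReal.add_ne_top.2 ⟨hfin, ENNReal.ofReal_ne_top⟩,
        ENNReal.ofReal_ne_top⟩
    obtain ⟨p, hp, hmin⟩ := exists_min_redFun hElsc hEcoercive hZ hlamT hlamS
      (isCompact_hullSet hTcpt) (isCompact_hullSet hScpt) hA hp₀ hp₀fin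
    obtain ⟨v, hv⟩ := hdesc p hp
    refine ⟨v, fun u => ?_⟩
    obtain ⟨q, hq, hJq⟩ := hlift u
    exact hv.trans ((hmin q hq).trans hJq.ge)
  refine ⟨hex, hex, ?_⟩
  rintro ⟨wT, wS, c⟩ hu ⟨vT, vS, d⟩ hv a b ha hb hab x
  lift a to ℝ≥0 using ha
  lift b to ℝ≥0 using hb
  have hab' : (a : ℝ≥0∞) + b = 1 := by exact_mod_cast hab
  have hlin : Φ ((a : ℝ) • wT + (b : ℝ) • vT) ((a : ℝ) • wS + (b : ℝ) • vS)
      ((a : ℝ) • c + (b : ℝ) • d) = (a : ℝ) • Φ wT wS c + (b : ℝ) • Φ vT vS d := by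
    rw [hΦ', hΦ', hΦ', vInt_comb _ _ _ _ _ hTint, vInt_comb _ _ _ _ _ hSint, map_add, map_smul,
      map_smul]
    module
  have hEab := hEconvex (Φ wT wS c) (Φ vT vS d) a b a.2 b.2 hab
  rw [ENNReal.ofReal_coe_nnreal, ENNReal.ofReal_coe_nnreal] at hEab
  calc J ((a : ℝ) • (wT, wS, c) + (b : ℝ) • (vT, vS, d))
      = J ((a : ℝ) • wT + (b : ℝ) • vT, (a : ℝ) • wS + (b : ℝ) • vS,
          (a : ℝ) • c + (b : ℝ) • d) := rfl
    _ ≤ (a * E (Φ wT wS c) + b * E (Φ vT vS d))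
        + (a * ENNReal.ofReal (lamT * tvNorm wT) + b * ENNReal.ofReal (lamT * tvNorm vT))
        + (a * ENNReal.ofReal (lamS * tvNorm wS) + b * ENNReal.ofReal (lamS * tvNorm vS)) := by
      rw [hJ, hlin]
      exact add_le_add (add_le_add hEab (ofReal_tvNorm_comb_le hlamT.le a b wT vT))
        (ofReal_tvNorm_comb_le hlamS.le a b wS vS)
    _ = a * J (wT, wS, c) + b * J (vT, vS, d) := by rw [hJ, hJ]; ring
    _ ≤ a * J x + b * J x := by gcongr; exacts [hu x, hv x]
    _ = J x := by rw [← add_mul, hab', one_mul]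
end

section
/- Under the hypotheses of the measure-domain recovery problem (N ≤ L, E : ℝ^L → [0,∞] proper lower semi-continuous coercive convex, sensing data g_{T,ℓ} ∈ C₀(ℝ), g_{S,ℓ} ∈ C(𝕋), z_ℓ ∈ ℝ^N with Φ(0,0,c) = 0 ⟹ c = 0 and E ∘ Φ proper, λ_T, λ_S > 0), every extreme point (w̃_T, w̃_S, c̃) of the convex set of minimizers of J(w_T, w_S, c) = E(Φ(w_T, w_S, c)) + λ_T ‖w_T‖_TV + λ_S ‖w_S‖_TV satisfies: w̃_T = ∑_{k=1}^{K_T} a_k δ_{u_k} and w̃_S = ∑_{k=1}^{K_S} b_k δ_{v_k}, where the a_k ∈ ℝ are nonzero, the u_k ∈ ℝ are distinct, the b_k ∈ ℝ are nonzero, the v_k ∈ 𝕋 are distinct, and K_T + K_S ≤ L − N. -/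
/-! Let `v = (wT, wS, c)` be an extreme minimizer. Given `KT` and `KS` distinct points in the supports
of `|wT|` and `|wS|`, choose disjoint open neighbourhoods `U i`, `V j` of them, all of positive mass
(`exists_disjoint_nhds`). Replace `wT` by `(1 + ∑ t i • 1_{U i}) wT`, `wS` by
`(1 + ∑ s j • 1_{V j}) wS` and `c` by `c + d`. As long as the weights are nonnegative, the
measurements and the total variations are affine in `(t, s, d)` (`exists_reweight`). If
`KT + KS + N > L`, a nonzero `(t, s, d)` leaves the `L` measurements unchanged, so `J` is affine on
the segment from `v - (t, s, d)` to `v + (t, s, d)`, whose midpoint is the minimizer `v`. Hence `J`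
is constant there and `v` is not extreme, a contradiction.

So the supports have at most `L - N` points in total, and a signed measure with finite support is a
combination of Dirac measures at these points (`exists_dirac_sum`). -/

open MeasureTheory Filter
open scoped ENNReal RealInnerProductSpace

/-- The Dirac signed measure at a point. -/
noncomputable def diracSM {α : Type*} [MeasurableSpace α] (x : α) : SignedMeasure α :=
  (Measure.dirac x).toSignedMeasure

/-! ### Reweighting a measure on disjoint sets -/

/-- The weight `1 + ∑ i, t i • 1_{U i}`. -/
noncomputable def wt {α ι : Type*} [Fintype ι] (U : ι → Set α) (t : ι → ℝ) (x : α) : ℝ :=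
  1 + ∑ i, t i * (U i).indicator (fun _ => (1 : ℝ)) x

lemma wt_nonneg {α ι : Type*} [Fintype ι] {U : ι → Set α} {t : ι → ℝ}
    (hd : Pairwise fun i j => Disjoint (U i) (U j)) (ht : ∀ i, |t i| ≤ 1) (x : α) : 0 ≤ wt U t x := by
  unfold wt
  by_cases hx : ∃ i, x ∈ U i
  · obtain ⟨i, hi⟩ := hx
    -- By disjointness only the index `i` contributes to the sum.
    rw [Finset.sum_eq_single i]
    · simp only [Set.indicator_of_mem hi, mul_one]
      linarith [(abs_le.1 (ht i)).1]
    · intro j _ hj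
      rw [Set.indicator_of_notMem, mul_zero]
      exact fun hxj => Set.disjoint_left.1 (hd hj) hxj hi
    · simp
  · push Not at hx
    simp [Set.indicator_of_notMem (hx _)]

section Reweight

variable {α ι : Type*} [MeasurableSpace α] [Fintype ι] {U : ι → Set α} {t : ι → ℝ}

lemma wt_measurable (hU : ∀ i, MeasurableSet (U i)) : Measurable (wt U t) := by
  unfold wt
  refine measurable_const.add (Finset.measurable_sum _ fun i _ => ?_)
  exact measurable_const.mul (measurable_const.indicator (hU i))

/-- The measure with density `wt U t` with respect to `μ`; negative values of the weight are
truncated to `0`, which does not occur under the hypotheses of `wt_nonneg`. -/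
noncomputable def reweight (μ : Measure α) (U : ι → Set α) (t : ι → ℝ) : Measure α :=
  μ.withDensity fun x => ENNReal.ofReal (wt U t x)

lemma wt_integrable (μ : Measure α) [IsFiniteMeasure μ] (hU : ∀ i, MeasurableSet (U i)) :
    Integrable (wt U t) μ := by
  unfold wt
  refine (integrable_const _).add (integrable_finsetSum _ fun i _ => ?_)
  exact ((integrable_const _).indicator (hU i)).const_mul _

lemma reweight_finite (μ : Measure α) [IsFiniteMeasure μ] (hU : ∀ i, MeasurableSet (U i)) :
    IsFiniteMeasure (reweight μ U t) :=
  isFiniteMeasure_withDensity_ofReal (wt_integrable μ hU).2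

lemma integral_reweight (μ : Measure α) (hU : ∀ i, MeasurableSet (U i))
    (hd : Pairwise fun i j => Disjoint (U i) (U j)) (ht : ∀ i, |t i| ≤ 1)
    {g : α → ℝ} (hg : Integrable g μ) :
    ∫ x, g x ∂(reweight μ U t) = ∫ x, g x ∂μ + ∑ i, t i * ∫ x in U i, g x ∂μ := by
  unfold reweight
  rw [integral_withDensity_eq_integral_toReal_smul (wt_measurable hU).ennreal_ofReal
    (by simp)]
  have h : ∀ x, (ENNReal.ofReal (wt U t x)).toReal • g x
      = g x + ∑ i, t i * (U i).indicator g x := by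
    intro x
    rw [ENNReal.toReal_ofReal (wt_nonneg hd ht x), wt, smul_eq_mul, add_mul, one_mul,
      Finset.sum_mul]
    congr 1
    refine Finset.sum_congr rfl fun i _ => ?_
    by_cases hx : x ∈ U i <;> simp [hx]
  simp_rw [h]
  have hi : ∀ i ∈ Finset.univ, Integrable (fun x => t i * (U i).indicator g x) μ :=
    fun i _ => (hg.indicator (hU i)).const_mul _
  rw [integral_add hg (integrable_finsetSum _ hi), integral_finsetSum _ hi]
  congr 1
  refine Finset.sum_congr rfl fun i _ => ?_
  rw [integral_const_mul, integral_indicator (hU i)]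

lemma real_reweight (μ : Measure α) [IsFiniteMeasure μ] (hU : ∀ i, MeasurableSet (U i))
    (hd : Pairwise fun i j => Disjoint (U i) (U j)) (ht : ∀ i, |t i| ≤ 1)
    {A : Set α} (hA : MeasurableSet A) :
    (reweight μ U t).real A = μ.real A + ∑ i, t i * μ.real (A ∩ U i) := by
  have h := integral_reweight μ hU hd ht (g := A.indicator 1) ((integrable_const (1 : ℝ)).indicator hA)
  simpa [integral_indicator_one hA, measureReal_restrict_apply hA] using h

/-- A reweighting by a nonnegative density acts on both Jordan parts of `w` separately and keeps
them mutually singular, so total variation and integrals are affine in `t` for `|t i| ≤ 1`. -/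
lemma exists_reweight (w : SignedMeasure α) (hU : ∀ i, MeasurableSet (U i))
    (hd : Pairwise fun i j => Disjoint (U i) (U j)) :
    ∃ P : (ι → ℝ) → SignedMeasure α, ∀ t : ι → ℝ, (∀ i, |t i| ≤ 1) →
      tvNorm (P t) = tvNorm w + ∑ i, t i * w.totalVariation.real (U i) ∧
      (∀ g : α → ℝ, Integrable g w.totalVariation →
        sInt (P t) g = sInt w g + ∑ i, t i *
          (∫ x in U i, g x ∂w.toJordanDecomposition.posPart
            - ∫ x in U i, g x ∂w.toJordanDecomposition.negPart)) ∧
      P t + P (-t) = (2 : ℝ) • w ∧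
      (P t = w → (∀ i, w.totalVariation (U i) ≠ 0) → t = 0) := by
  set p := w.toJordanDecomposition.posPart with hp
  set n := w.toJordanDecomposition.negPart with hn
  have : IsFiniteMeasure p := w.toJordanDecomposition.posPart_finite
  have : IsFiniteMeasure n := w.toJordanDecomposition.negPart_finite
  have hw : ∀ A, MeasurableSet A → w A = p.real A - n.real A := fun A hA =>
    w.apply_eq_posPart_real_sub_negPart_real hA
  let Q : (ι → ℝ) → JordanDecomposition α := fun t =>
    { posPart := reweight p U t
      negPart := reweight n U t
      posPart_finite := reweight_finite p hU
      negPart_finite := reweight_finite n hU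
      mutuallySingular :=
        w.toJordanDecomposition.mutuallySingular.withDensity.symm.withDensity.symm }
  have hQ : ∀ t, (Q t).toSignedMeasure.toJordanDecomposition = Q t := fun t =>
    JordanDecomposition.toJordanDecomposition_toSignedMeasure _
  have hQA : ∀ t : ι → ℝ, (∀ i, |t i| ≤ 1) → ∀ A, MeasurableSet A →
      (Q t).toSignedMeasure A = (p.real A + ∑ i, t i * p.real (A ∩ U i))
        - (n.real A + ∑ i, t i * n.real (A ∩ U i)) := by
    intro t ht A hA
    rw [SignedMeasure.apply_eq_posPart_real_sub_negPart_real _ hA, hQ]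
    change (reweight p U t).real A - (reweight n U t).real A = _
    rw [real_reweight p hU hd ht hA, real_reweight n hU hd ht hA]
  refine ⟨fun t => (Q t).toSignedMeasure, fun t ht => ⟨?_, ?_, ?_, ?_⟩⟩
  · have hf1 : IsFiniteMeasure (reweight p U t) := reweight_finite p hU
    have hf2 : IsFiniteMeasure (reweight n U t) := reweight_finite n hU
    change Measure.real _ _ = Measure.real _ _ + _
    unfold SignedMeasure.totalVariation
    rw [hQ, ← hp, ← hn]
    change (reweight p U t + reweight n U t).real _ = _
    have hadd : ∀ A, (p + n).real A = p.real A + n.real A := fun A => measureReal_add_apply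
    rw [measureReal_add_apply, hadd]
    simp only [hadd]
    rw [real_reweight p hU hd ht .univ, real_reweight n hU hd ht .univ]
    simp only [Set.univ_inter, mul_add, Finset.sum_add_distrib]
    ring
  · intro g hg
    have hgp : Integrable g p := hg.mono_measure (Measure.le_add_right le_rfl)
    have hgn : Integrable g n := hg.mono_measure (Measure.le_add_left le_rfl)
    unfold sInt
    rw [hQ, ← hp, ← hn]
    change ∫ x, g x ∂(reweight p U t) - ∫ x, g x ∂(reweight n U t) = _
    rw [integral_reweight p hU hd ht hgp, integral_reweight n hU hd ht hgn]
    simp only [mul_sub, Finset.sum_sub_distrib]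
    ring
  · ext A hA
    have ht' : ∀ i, |(-t) i| ≤ 1 := by simpa using ht
    rw [add_apply, smul_apply, hQA t ht A hA, hQA _ ht' A hA, hw A hA]
    simp only [Pi.neg_apply, neg_mul, Finset.sum_neg_distrib, smul_eq_mul]
    ring
  · intro hPw hpos
    have hQw : Q t = w.toJordanDecomposition := by rw [← hQ t]; exact congrArg _ hPw
    have h1 : reweight p U t = p := congrArg JordanDecomposition.posPart hQw
    have h2 : reweight n U t = n := congrArg JordanDecomposition.negPart hQw
    funext j
    have key : ∀ μ : Measure α, IsFiniteMeasure μ → reweight μ U t = μ → t j * μ.real (U j) = 0 := by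
      intro μ _ h
      have h3 := real_reweight μ hU hd ht (hU j)
      rw [h, Finset.sum_eq_single j, Set.inter_self] at h3
      · linarith
      · intro i _ hij
        rw [(hd hij.symm).inter_eq]
        simp
      · simp
    have k1 := key p inferInstance h1
    have k2 := key n inferInstance h2
    have k3 : t j * w.totalVariation.real (U j) = 0 := by
      change t j * (p + n).real (U j) = 0
      rw [measureReal_add_apply, mul_add, k1, k2, add_zero]
    rcases mul_eq_zero.1 k3 with h | h
    · exact h
    · exact absurd ((measureReal_eq_zero_iff).1 h) (hpos j)

end Reweight

/-! ### Measures with finite support -/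

/-- A signed measure whose total variation is supported in a finite set `F` is a combination of at
most `F.card` Dirac measures: those at the points of `F` where `w {x} ≠ 0`. -/
lemma exists_dirac_sum {α : Type*} [TopologicalSpace α] [SecondCountableTopology α] [T2Space α]
    [MeasurableSpace α] [BorelSpace α] (w : SignedMeasure α) (F : Finset α)
    (hF : w.totalVariation.support ⊆ F) :
    ∃ (K : ℕ) (a : Fin K → ℝ) (u : Fin K → α), (∀ k, a k ≠ 0) ∧ Function.Injective u ∧
      K ≤ F.card ∧ w = ∑ k, a k • diracSM (u k) := by
  classical
  set G := F.filter fun x => w {x} ≠ 0 with hG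
  have hnull : w.totalVariation (F : Set α)ᶜ = 0 :=
    measure_mono_null (Set.compl_subset_compl.2 hF) Measure.measure_compl_support
  have hsum : w = ∑ x ∈ G, w {x} • diracSM x := by
    rw [hG, Finset.sum_filter_of_ne (by intro x _ h h0; simp [h0] at h)]
    ext A hA
    have h0 : w A = w (A ∩ F) := by
      have hd : Disjoint (A ∩ F) (A \ F) := Set.disjoint_sdiff_inter.symm
      have hz : w (A \ F) = 0 := by
        refine SignedMeasure.null_of_totalVariation_zero _ (measure_mono_null ?_ hnull)
        exact fun x hx => hx.2
      have h := VectorMeasure.of_union hd (v := w) (hA.inter F.measurableSet)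
        (hA.diff F.measurableSet)
      rwa [Set.inter_union_sdiff, hz, add_zero] at h
    have h1 : w (A ∩ F) = ∑ x ∈ F.filter (· ∈ A), w {x} := by
      have : A ∩ F = ⋃ x ∈ F.filter (· ∈ A), {x} := by
        ext x; simp [and_comm]
      rw [this, VectorMeasure.of_biUnion_finset]
      · intro x _ y _ hxy
        simpa [Function.onFun] using hxy
      · intro x _
        exact measurableSet_singleton x
    rw [h0, h1, Finset.sum_filter, FunLike.coe_sum, Finset.sum_apply]
    refine Finset.sum_congr rfl fun x _ => ?_
    rw [smul_apply, diracSM, Measure.toSignedMeasure_apply_measurable hA]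
    by_cases hx : x ∈ A <;> simp [measureReal_def, hA, hx]
  refine ⟨G.card, fun k => w {(G.equivFin.symm k : α)}, fun k => G.equivFin.symm k, ?_, ?_,
    Finset.card_filter_le _ _, ?_⟩
  · intro k
    exact (Finset.mem_filter.1 (G.equivFin.symm k).2).2
  · exact Subtype.val_injective.comp G.equivFin.symm.injective
  · conv_lhs => rw [hsum]
    rw [← Finset.sum_coe_sort, ← G.equivFin.symm.sum_comp]

/-- Distinct support points have disjoint open neighbourhoods, each of positive measure. -/
lemma exists_disjoint_nhds {α : Type*} [TopologicalSpace α] [T2Space α]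
    [MeasurableSpace α] [BorelSpace α] (μ : Measure α) (F : Finset α)
    (hF : (F : Set α) ⊆ μ.support) :
    ∃ U : F → Set α, (∀ i, MeasurableSet (U i)) ∧ (Pairwise fun i j => Disjoint (U i) (U j)) ∧
      ∀ i, μ (U i) ≠ 0 := by
  obtain ⟨V, hV, hd⟩ := F.finite_toSet.t2_separation
  refine ⟨fun i => V i, fun i => (hV i).2.measurableSet, fun i j hij => ?_, fun i => ?_⟩
  · exact hd i.2 j.2 fun h => hij (Subtype.ext h)
  · exact ((Measure.mem_support_iff_forall _).1 (hF i.2) _ ((hV i).2.mem_nhds (hV i).1)).ne'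

/-! ### The representer theorem -/

/-- Seasonal-trend representer theorem for Radon measures: every extreme point of the
set of minimizers of `J(w_T, w_S, c) = E(Φ(w_T,w_S,c)) + λ_T‖w_T‖_TV + λ_S‖w_S‖_TV`
has `w_T` a finite linear combination of Diracs on ℝ and `w_S` a finite linear
combination of Diracs on 𝕋, with nonzero weights, distinct knots, and
`K_T + K_S ≤ L - N` knots in total. -/
theorem stmt11 (L N : ℕ) (hNL : N ≤ L)
    (lamT lamS : ℝ) (hlamT : 0 < lamT) (hlamS : 0 < lamS)
    (E : EuclideanSpace ℝ (Fin L) → ℝ≥0∞)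
    (hEproper : ∃ z, E z ≠ ⊤)
    (hElsc : LowerSemicontinuous E)
    (hEcoercive : ∀ z : ℕ → EuclideanSpace ℝ (Fin L),
      Tendsto (fun n => ‖z n‖) atTop atTop →
      Tendsto (fun n => E (z n)) atTop (nhds ⊤))
    (hEconvex : ∀ z w : EuclideanSpace ℝ (Fin L), ∀ a b : ℝ, 0 ≤ a → 0 ≤ b → a + b = 1 →
      E (a • z + b • w) ≤ ENNReal.ofReal a * E z + ENNReal.ofReal b * E w)
    (gT : Fin L → ℝ → ℝ)
    (hgTcont : ∀ ℓ, Continuous (gT ℓ))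
    (hgTzero : ∀ ℓ, Tendsto (gT ℓ) (cocompact ℝ) (nhds 0))
    (gS : Fin L → AddCircle (1:ℝ) → ℝ)
    (hgScont : ∀ ℓ, Continuous (gS ℓ))
    (z : Fin L → EuclideanSpace ℝ (Fin N))
    (Φ : SignedMeasure ℝ → SignedMeasure (AddCircle (1:ℝ)) → EuclideanSpace ℝ (Fin N) →
      EuclideanSpace ℝ (Fin L))
    (hΦ : ∀ wT wS c ℓ, Φ wT wS c ℓ = sInt wT (gT ℓ) + sInt wS (gS ℓ) + ⟪z ℓ, c⟫)
    (hinj : ∀ c, Φ 0 0 c = 0 → c = 0)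
    (J : SignedMeasure ℝ × SignedMeasure (AddCircle (1:ℝ)) × EuclideanSpace ℝ (Fin N) →
      ℝ≥0∞)
    (hJ : ∀ wT wS c, J (wT, wS, c) = E (Φ wT wS c)
      + ENNReal.ofReal (lamT * tvNorm wT) + ENNReal.ofReal (lamS * tvNorm wS))
    (hJproper : ∃ wT wS c, E (Φ wT wS c) ≠ ⊤) :
    ∀ v ∈ Set.extremePoints ℝ {v | ∀ u, J v ≤ J u},
      ∃ (KT KS : ℕ) (a : Fin KT → ℝ) (u : Fin KT → ℝ)
        (b : Fin KS → ℝ) (w : Fin KS → AddCircle (1:ℝ)),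
        (∀ k, a k ≠ 0) ∧ Function.Injective u ∧
        (∀ k, b k ≠ 0) ∧ Function.Injective w ∧
        KT + KS ≤ L - N ∧
        v.1 = ∑ k, a k • diracSM (u k) ∧
        v.2.1 = ∑ k, b k • diracSM (w k) := by
  rintro ⟨wT, wS, c⟩ hv
  obtain ⟨hmin, hext⟩ := mem_extremePoints_iff_left.1 hv
  have hmin' : ∀ u, J (wT, wS, c) ≤ J u := hmin
  have hEfin : E (Φ wT wS c) ≠ ⊤ := by
    obtain ⟨w₁, w₂, c', h⟩ := hJproper
    intro htop
    have h1 := hmin' (w₁, w₂, c')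
    rw [hJ, hJ, htop, top_add, top_add, top_le_iff] at h1
    simp [h] at h1
  have hgTi : ∀ ℓ, Integrable (gT ℓ) wT.totalVariation := fun ℓ =>
    (ZeroAtInftyContinuousMap.mk ⟨gT ℓ, hgTcont ℓ⟩ (hgTzero ℓ)).toBCF.integrable _
  have hgSi : ∀ ℓ, Integrable (gS ℓ) wS.totalVariation := fun ℓ =>
    (BoundedContinuousFunction.mkOfCompact ⟨gS ℓ, hgScont ℓ⟩).integrable _
  have key : ∀ (FT : Finset ℝ) (FS : Finset (AddCircle (1 : ℝ))),
      (FT : Set ℝ) ⊆ wT.totalVariation.support →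
      (FS : Set (AddCircle (1 : ℝ))) ⊆ wS.totalVariation.support →
      FT.card + FS.card ≤ L - N := by
    intro FT FS hFT hFS
    by_contra! hcard
    obtain ⟨U, hUm, hUd, hU0⟩ := exists_disjoint_nhds _ FT hFT
    obtain ⟨V, hVm, hVd, hV0⟩ := exists_disjoint_nhds _ FS hFS
    obtain ⟨PT, hPT⟩ := exists_reweight wT hUm hUd
    obtain ⟨PS, hPS⟩ := exists_reweight wS hVm hVd
    -- First-order variation of the measurements in the direction `k`.
    let A : (FT → ℝ) × (FS → ℝ) × EuclideanSpace ℝ (Fin N) →ₗ[ℝ] (Fin L → ℝ) :=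
      { toFun := fun k ℓ =>
          ∑ i, k.1 i * (∫ x in U i, gT ℓ x ∂wT.toJordanDecomposition.posPart
            - ∫ x in U i, gT ℓ x ∂wT.toJordanDecomposition.negPart)
          + ∑ j, k.2.1 j * (∫ x in V j, gS ℓ x ∂wS.toJordanDecomposition.posPart
            - ∫ x in V j, gS ℓ x ∂wS.toJordanDecomposition.negPart)
          + ⟪z ℓ, k.2.2⟫
        map_add' := by
          intro k k'
          funext ℓ
          simp only [Prod.fst_add, Prod.snd_add, Pi.add_apply, add_mul, Finset.sum_add_distrib,
            inner_add_right]
          ring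
        map_smul' := by
          intro r k
          funext ℓ
          simp only [Prod.smul_fst, Prod.smul_snd, Pi.smul_apply, smul_eq_mul, mul_assoc,
            ← Finset.mul_sum, inner_smul_right, RingHom.id_apply]
          ring }
    obtain ⟨k₀, hk₀A, hk₀⟩ : ∃ k ∈ LinearMap.ker A, k ≠ 0 := by
      refine (Submodule.ne_bot_iff _).1 (LinearMap.ker_ne_bot_of_finrank_lt ?_)
      simp
      omega
    -- Rescale so that all weights `1 ± k` stay nonnegative.
    set k := ‖k₀‖⁻¹ • k₀ with hk
    have hknorm : ‖k‖ = 1 := by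
      rw [hk, norm_smul, norm_inv, norm_norm, inv_mul_cancel₀ (norm_ne_zero_iff.2 hk₀)]
    have hkA : A k = 0 := by rw [hk, map_smul, LinearMap.mem_ker.1 hk₀A, smul_zero]
    let σ : (FT → ℝ) × (FS → ℝ) × EuclideanSpace ℝ (Fin N) → ℝ := fun k =>
      lamT * ∑ i, k.1 i * wT.totalVariation.real (U i)
        + lamS * ∑ j, k.2.1 j * wS.totalVariation.real (V j)
    have hbd : ∀ k : (FT → ℝ) × (FS → ℝ) × EuclideanSpace ℝ (Fin N), ‖k‖ = 1 →
        (∀ i, |k.1 i| ≤ 1) ∧ ∀ j, |k.2.1 j| ≤ 1 := by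
      intro k hk
      constructor
      · intro i
        exact ((norm_le_pi_norm k.1 i).trans (norm_fst_le k)).trans hk.le
      · intro j
        exact (((norm_le_pi_norm k.2.1 j).trans (norm_fst_le k.2)).trans (norm_snd_le k)).trans
          hk.le
    have htv : ∀ {α : Type} [MeasurableSpace α] (w : SignedMeasure α), 0 ≤ tvNorm w :=
      fun w => ENNReal.toReal_nonneg
    have hJk : ∀ k, ‖k‖ = 1 → A k = 0 → J (PT k.1, PS k.2.1, c + k.2.2) = E (Φ wT wS c)
        + ENNReal.ofReal (lamT * tvNorm wT + lamS * tvNorm wS + σ k) ∧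
        0 ≤ lamT * tvNorm wT + lamS * tvNorm wS + σ k := by
      intro k hk hA
      obtain ⟨hb1, hb2⟩ := hbd k hk
      obtain ⟨hT1, hT2, -, -⟩ := hPT _ hb1
      obtain ⟨hS1, hS2, -, -⟩ := hPS _ hb2
      have hΦeq : Φ (PT k.1) (PS k.2.1) (c + k.2.2) = Φ wT wS c := by
        ext ℓ
        have hAℓ := congrFun hA ℓ
        change _ + _ + _ = (0 : ℝ) at hAℓ
        rw [hΦ, hΦ, hT2 _ (hgTi ℓ), hS2 _ (hgSi ℓ), inner_add_right]
        linarith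
      have hσ : lamT * tvNorm wT + lamS * tvNorm wS + σ k
          = lamT * tvNorm (PT k.1) + lamS * tvNorm (PS k.2.1) := by
        rw [hT1, hS1]
        ring
      have n1 := mul_nonneg hlamT.le (htv (PT k.1))
      have n2 := mul_nonneg hlamS.le (htv (PS k.2.1))
      refine ⟨?_, hσ ▸ add_nonneg n1 n2⟩
      rw [hJ, hΦeq, hσ, ENNReal.ofReal_add n1 n2, add_assoc]
    have hJv : J (wT, wS, c) = E (Φ wT wS c)
        + ENNReal.ofReal (lamT * tvNorm wT + lamS * tvNorm wS) := by
      rw [hJ, ENNReal.ofReal_add (mul_nonneg hlamT.le (htv _)) (mul_nonneg hlamS.le (htv _)),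
        add_assoc]
    have hσ_nonneg : ∀ k, ‖k‖ = 1 → A k = 0 → 0 ≤ σ k := by
      intro k hk hA
      obtain ⟨h1, h2⟩ := hJk k hk hA
      have h3 := hmin' (PT k.1, PS k.2.1, c + k.2.2)
      rw [h1, hJv, ENNReal.add_le_add_iff_left hEfin, ENNReal.ofReal_le_ofReal_iff h2] at h3
      linarith
    have hnk : ‖-k‖ = 1 := by rw [norm_neg, hknorm]
    have hnA : A (-k) = 0 := by rw [map_neg, hkA, neg_zero]
    have hσneg : σ (-k) = -σ k := by
      simp only [σ, Prod.fst_neg, Prod.snd_neg, Pi.neg_apply, neg_mul, Finset.sum_neg_distrib]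
      ring
    -- `J` is affine along the segment and minimal at its midpoint, hence constant.
    have hσ0 : σ k = 0 := by
      have h1 := hσ_nonneg k hknorm hkA
      have h2 := hσ_nonneg (-k) hnk hnA
      linarith
    have hm1 : J (PT k.1, PS k.2.1, c + k.2.2) = J (wT, wS, c) := by
      rw [(hJk k hknorm hkA).1, hσ0, add_zero, hJv]
    have hm2 : J (PT (-k).1, PS (-k).2.1, c + (-k).2.2) = J (wT, wS, c) := by
      rw [(hJk (-k) hnk hnA).1, hσneg, hσ0, neg_zero, add_zero, hJv]
    obtain ⟨hb1, hb2⟩ := hbd k hknorm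
    obtain ⟨-, -, hT3, hT4⟩ := hPT _ hb1
    obtain ⟨-, -, hS3, hS4⟩ := hPS _ hb2
    have hseg : (wT, wS, c) ∈ openSegment ℝ (PT k.1, PS k.2.1, c + k.2.2)
        (PT (-k).1, PS (-k).2.1, c + (-k).2.2) := by
      refine ⟨1 / 2, 1 / 2, by norm_num, by norm_num, by norm_num, ?_⟩
      rw [← smul_add, Prod.mk_add_mk, Prod.mk_add_mk, Prod.fst_neg, Prod.snd_neg, Prod.fst_neg,
        Prod.snd_neg, hT3, hS3, Prod.smul_mk, Prod.smul_mk, smul_smul, smul_smul]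
      have hc : (1 / 2 : ℝ) • (c + k.2.2 + (c + -k.2.2)) = c := by module
      rw [hc]
      norm_num
    have heq := hext _ (fun u => hm1 ▸ hmin' u) _ (fun u => hm2 ▸ hmin' u) hseg
    simp only [Prod.mk.injEq] at heq
    have hk0 : k = 0 :=
      Prod.ext (hT4 heq.1 hU0) (Prod.ext (hS4 heq.2.1 hV0) (add_eq_left.1 heq.2.2))
    rw [hk0, norm_zero] at hknorm
    exact zero_ne_one hknorm
  have hfT : wT.totalVariation.support.Finite := by
    by_contra hinf
    obtain ⟨F, hF, hFc⟩ := Set.Infinite.exists_subset_card_eq hinf (L - N + 1)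
    have := key F ∅ hF (by simp)
    omega
  have hfS : wS.totalVariation.support.Finite := by
    by_contra hinf
    obtain ⟨F, hF, hFc⟩ := Set.Infinite.exists_subset_card_eq hinf (L - N + 1)
    have := key ∅ F (by simp) hF
    omega
  have hle := key hfT.toFinset hfS.toFinset (by simp) (by simp)
  obtain ⟨KT, a, u, ha, hu, hKT, hwT⟩ := exists_dirac_sum wT hfT.toFinset (by simp)
  obtain ⟨KS, b, w, hb, hw, hKS, hwS⟩ := exists_dirac_sum wS hfS.toFinset (by simp)
  exact ⟨KT, KS, a, u, b, w, ha, hu, hb, hw, by omega, hwT, hwS⟩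
end
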